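/- Let α ∈ (1,∞), let β be its Hölder conjugate (1/α + 1/β = 1), and let φ : ℝ → [0,∞) be a measurable weight function for which all the integrals below are finite. Let G(x) = a_{α,1} exp(−|x|^α) with a_{α,1} = α/(2Γ(1/α)) be the generalized 1-Gaussian density, let W have the Gamma distribution with shape (α+1)/α and rate 1, and set Θ_α(W) = E[ φ(−W^{1/α}) + φ(W^{1/α}) ]. Then 2 · σ_{φ,α}(G) · [J^{w,φ}_{α,1}(G)]^{1/β} = Θ_α(W). -/

import Mathlib

/-!
Put `S = ∫ φ |x|^α G`, so that `σ = S^(1/α)`. The score of `G` satisfies `|G' / G| = α |x|^(α-1)`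
away from the origin, and `(α - 1) β = α`, so the Fisher information is `J = α^β S` and
`σ J^(1/β) = α S`. On the other side, the substitution `t = x^α` turns the Gamma expectation into
`α / Γ((α+1)/α) · ∫_{x>0} (φ(-x) + φ(x)) x^α exp(-x^α)`; unfolding this half-line integral to `ℝ`
and using `Γ((α+1)/α) = Γ(1/α) / α` gives `2 α S`. For `0 < α < 1` the conjugate exponent `β` is
negative and `G` has a cusp at the origin, but the computation is the same.
-/

open MeasureTheory Real

/-- The generalized deviation `σ_{φ,α}(f)`. -/
noncomputable def generalizedDeviation (φ : ℝ → ℝ) (α : ℝ) (f : ℝ → ℝ) : ℝ :=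
  (∫ x, φ x * |x| ^ α * f x) ^ (1 / α)

/-- The weighted Fisher information `J^{w,φ}_{α,p}(f)`. The parameter is the Hölder conjugate `β` of
`α`; `f'` stands for a derivative of `f`, of which only the values almost everywhere matter. -/
noncomputable def weightedFisherInfo (φ : ℝ → ℝ) (β p : ℝ) (f f' : ℝ → ℝ) : ℝ :=
  ∫ x, φ x * |f x ^ (p - 2) * f' x| ^ β * f x

/-- The expectation `E[h(W)]` for `W` with the Gamma distribution of shape `s` and rate `1`. -/
noncomputable def gammaExpectation (s : ℝ) (h : ℝ → ℝ) : ℝ :=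
  ∫ t in Set.Ioi (0 : ℝ), h t * (t ^ (s - 1) * exp (-t) / Gamma s)

/-- The generalized `1`-Gaussian density `G`. -/
noncomputable def oneGaussian (α : ℝ) (x : ℝ) : ℝ :=
  α / (2 * Gamma (1 / α)) * exp (-|x| ^ α)

lemma integral_eq_integral_Ioi_comp_neg_add {E : Type*} [NormedAddCommGroup E] [NormedSpace ℝ E]
    {f : ℝ → E} (hf : Integrable f) :
    ∫ x, f x = ∫ x in Set.Ioi (0 : ℝ), (f (-x) + f x) := by
  rw [integral_add hf.comp_neg.integrableOn hf.integrableOn, integral_comp_neg_Ioi, neg_zero,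
    intervalIntegral.integral_Iic_add_Ioi hf.integrableOn hf.integrableOn]

lemma logDeriv_const_mul_exp {a x : ℝ} (ha : a ≠ 0) {u : ℝ → ℝ} {u' : ℝ} (hu : HasDerivAt u u' x) :
    logDeriv (fun y => a * exp (u y)) x = u' := by
  rw [logDeriv_const_mul x a ha, logDeriv_apply, hu.exp.deriv,
    mul_div_cancel_left₀ _ (exp_ne_zero _)]

lemma abs_logDeriv_const_mul_exp_neg_abs_rpow {a x : ℝ} (ha : a ≠ 0) (hx : x ≠ 0) (p : ℝ) :
    |logDeriv (fun y => a * exp (-|y| ^ p)) x| = |p| * |x| ^ (p - 1) := by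
  have hu : HasDerivAt (fun y : ℝ => -|y| ^ p) (-(SignType.sign x * p * |x| ^ (p - 1))) x :=
    ((hasDerivAt_abs hx).rpow_const (Or.inl (abs_ne_zero.mpr hx))).fun_neg
  have hsign : |(SignType.sign x : ℝ)| = 1 := by
    rcases hx.lt_or_gt with hneg | hpos
    · simp [hneg]
    · simp [hpos]
  rw [logDeriv_const_mul_exp ha hu, abs_neg, abs_mul, abs_mul, hsign, one_mul,
    abs_of_nonneg (rpow_nonneg (abs_nonneg x) _)]

lemma integral_mul_abs_rpow_mul_of_abs_eq {s : ℝ → ℝ} {c q : ℝ} (hc : 0 ≤ c)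
    (hs : ∀ᵐ x, |s x| = c * |x| ^ q) (φ f : ℝ → ℝ) (β : ℝ) :
    ∫ x, φ x * |s x| ^ β * f x = c ^ β * ∫ x, φ x * |x| ^ (q * β) * f x := by
  rw [← integral_const_mul]
  refine integral_congr_ae ?_
  filter_upwards [hs] with x hx
  rw [hx, mul_rpow hc (rpow_nonneg (abs_nonneg x) q), ← rpow_mul (abs_nonneg x)]
  ring

lemma gammaExpectation_comp_rpow_one_div {p : ℝ} (hp : p ≠ 0) (s : ℝ) (h : ℝ → ℝ) :
    gammaExpectation s (fun t => h (t ^ (1 / p))) =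
      |p| / Gamma s * ∫ x in Set.Ioi (0 : ℝ), h x * x ^ (p * s - 1) * exp (-x ^ p) := by
  rw [gammaExpectation, ← integral_comp_rpow_Ioi _ hp, ← integral_const_mul]
  refine setIntegral_congr_fun measurableSet_Ioi fun x (hx : 0 < x) => ?_
  have hroot : (x ^ p) ^ (1 / p) = x := by rw [one_div, rpow_rpow_inv hx.le hp]
  have hpow : x ^ (p * s - 1) = x ^ (p - 1) * (x ^ p) ^ (s - 1) := by
    rw [← rpow_mul hx.le, ← rpow_add hx]
    ring_nf
  simp only [smul_eq_mul, hroot, hpow]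
  ring

lemma rpow_one_div_mul_rpow_one_div {α β S c : ℝ} (hβ : β ≠ 0) (hαβ : 1 / α + 1 / β = 1)
    (hS : 0 ≤ S) (hc : 0 ≤ c) : S ^ (1 / α) * (c ^ β * S) ^ (1 / β) = c * S := by
  have hsplit : S ^ (1 / α) * S ^ (1 / β) = S := by
    rw [← rpow_add' hS (by rw [hαβ]; exact one_ne_zero), hαβ, rpow_one]
  calc S ^ (1 / α) * (c ^ β * S) ^ (1 / β)
      = S ^ (1 / α) * (c * S ^ (1 / β)) := by
        rw [mul_rpow (rpow_nonneg hc β) hS, one_div β, rpow_rpow_inv hc hβ]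
    _ = c * (S ^ (1 / α) * S ^ (1 / β)) := by ring
    _ = c * S := by rw [hsplit]

section OneGaussian

variable {α : ℝ}

lemma oneGaussian_pos (hα : 0 < α) (x : ℝ) : 0 < oneGaussian α x := by
  have := Gamma_pos_of_pos (one_div_pos.mpr hα)
  unfold oneGaussian
  positivity

lemma integral_mul_abs_rpow_mul_oneGaussian_nonneg (hα : 0 < α) {φ : ℝ → ℝ} (hφ : ∀ x, 0 ≤ φ x) :
    0 ≤ ∫ x, φ x * |x| ^ α * oneGaussian α x :=
  integral_nonneg fun x =>
    mul_nonneg (mul_nonneg (hφ x) (rpow_nonneg (abs_nonneg x) α)) (oneGaussian_pos hα x).le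

lemma abs_logDeriv_oneGaussian (hα : 0 < α) {x : ℝ} (hx : x ≠ 0) :
    |logDeriv (oneGaussian α) x| = α * |x| ^ (α - 1) := by
  have ha : α / (2 * Gamma (1 / α)) ≠ 0 := left_ne_zero_of_mul (oneGaussian_pos hα 0).ne'
  have hscore := abs_logDeriv_const_mul_exp_neg_abs_rpow ha hx α
  rwa [abs_of_pos hα] at hscore

lemma weightedFisherInfo_oneGaussian (hα : 0 < α) {β : ℝ} (hconj : (α - 1) * β = α)
    (φ : ℝ → ℝ) {G' : ℝ → ℝ} (hG' : ∀ᵐ x, HasDerivAt (oneGaussian α) (G' x) x) :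
    weightedFisherInfo φ β 1 (oneGaussian α) G' =
      α ^ β * ∫ x, φ x * |x| ^ α * oneGaussian α x := by
  have hscore : ∀ᵐ x, |oneGaussian α x ^ (1 - 2 : ℝ) * G' x| = α * |x| ^ (α - 1) := by
    filter_upwards [hG', Measure.ae_ne volume 0] with x hx hx0
    rw [← abs_logDeriv_oneGaussian hα hx0, logDeriv_apply, hx.deriv, div_eq_inv_mul,
      ← rpow_neg_one]
    norm_num
  rw [weightedFisherInfo, integral_mul_abs_rpow_mul_of_abs_eq hα.le hscore, hconj]

lemma integral_mul_abs_rpow_mul_oneGaussian_eq_integral_Ioi {φ : ℝ → ℝ}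
    (hint : Integrable fun x => φ x * |x| ^ α * oneGaussian α x) :
    ∫ x, φ x * |x| ^ α * oneGaussian α x =
      α / (2 * Gamma (1 / α)) *
        ∫ x in Set.Ioi (0 : ℝ), (φ (-x) + φ x) * x ^ α * exp (-x ^ α) := by
  rw [integral_eq_integral_Ioi_comp_neg_add hint, ← integral_const_mul]
  refine setIntegral_congr_fun measurableSet_Ioi fun x (hx : 0 < x) => ?_
  simp only [oneGaussian, abs_neg, abs_of_pos hx]
  ring

lemma gammaExpectation_weight_eq (hα : 0 < α) {φ : ℝ → ℝ}
    (hint : Integrable fun x => φ x * |x| ^ α * oneGaussian α x) :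
    gammaExpectation ((α + 1) / α) (fun t => φ (-(t ^ (1 / α))) + φ (t ^ (1 / α))) =
      2 * (α * ∫ x, φ x * |x| ^ α * oneGaussian α x) := by
  have hexponent : α * ((α + 1) / α) - 1 = α := by field_simp; ring
  have hΓ : Gamma ((α + 1) / α) = 1 / α * Gamma (1 / α) := by
    rw [← Gamma_add_one (one_div_pos.mpr hα).ne']
    congr 1
    field_simp
    ring
  rw [gammaExpectation_comp_rpow_one_div hα.ne' _ fun x => φ (-x) + φ x, hexponent, hΓ,
    abs_of_pos hα, integral_mul_abs_rpow_mul_oneGaussian_eq_integral_Ioi hint]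
  field_simp

end OneGaussian

theorem generalized_one_gaussian_weighted_identity_general {α β : ℝ} (hα : 0 < α) (hα_ne : α ≠ 1)
    (hβ : 1 / α + 1 / β = 1) {φ G' : ℝ → ℝ}
    (hG' : ∀ᵐ x, HasDerivAt (oneGaussian α) (G' x) x)
    (hσ_int : Integrable fun x => φ x * |x| ^ α * oneGaussian α x)
    (hσ_nonneg : 0 ≤ ∫ x, φ x * |x| ^ α * oneGaussian α x) :
    2 * generalizedDeviation φ α (oneGaussian α) *
        weightedFisherInfo φ β 1 (oneGaussian α) G' ^ (1 / β) =
      gammaExpectation ((α + 1) / α) (fun t => φ (-(t ^ (1 / α))) + φ (t ^ (1 / α))) := by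
  have hβ_ne : β ≠ 0 := by
    rintro rfl
    exact hα_ne (by simpa using hβ)
  have hconj : (α - 1) * β = α := by
    field_simp at hβ
    linarith
  rw [weightedFisherInfo_oneGaussian hα hconj φ hG', gammaExpectation_weight_eq hα hσ_int,
    generalizedDeviation, mul_assoc, rpow_one_div_mul_rpow_one_div hβ_ne hβ hσ_nonneg hα.le]

/-- For the generalized `1`-Gaussian `G(x) = a_{α,1} exp(-|x|^α)`,
`2 σ_{φ,α}(G) [J^{w,φ}_{α,1}(G)]^(1/β) = Θ_α(W)` with
`W ~ Gamma((α+1)/α, 1)` and `Θ_α(W) = E[φ(-W^(1/α)) + φ(W^(1/α))]`. -/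
theorem generalized_one_gaussian_weighted_identity
    (α β : ℝ) (hα : 1 < α) (hβ : 1 / α + 1 / β = 1)
    (φ : ℝ → ℝ) (hφ_nonneg : ∀ x, 0 ≤ φ x) (hφ_meas : Measurable φ)
    (a : ℝ) (ha : a = α / (2 * Real.Gamma (1 / α)))
    (G : ℝ → ℝ) (hG : G = fun x => a * Real.exp (-|x| ^ α))
    (G' : ℝ → ℝ) (hG' : ∀ᵐ x ∂volume, HasDerivAt G (G' x) x)
    (σG J Θ : ℝ)
    (hσ : σG = (∫ x, φ x * |x| ^ α * G x) ^ (1 / α))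
    (hσ_int : Integrable (fun x => φ x * |x| ^ α * G x))
    (hJ : J = ∫ x, φ x * |G x ^ (1 - 2 : ℝ) * G' x| ^ β * G x)
    (hJ_int : Integrable (fun x => φ x * |G x ^ (1 - 2 : ℝ) * G' x| ^ β * G x))
    (hΘ : Θ = ∫ t in Set.Ioi (0 : ℝ),
        (φ (-(t ^ (1 / α))) + φ (t ^ (1 / α))) *
          (t ^ ((α + 1) / α - 1) * Real.exp (-t) / Real.Gamma ((α + 1) / α)))
    (hΘ_int : IntegrableOn (fun t =>
        (φ (-(t ^ (1 / α))) + φ (t ^ (1 / α))) *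
          (t ^ ((α + 1) / α - 1) * Real.exp (-t) / Real.Gamma ((α + 1) / α)))
        (Set.Ioi (0 : ℝ))) :
    2 * σG * J ^ (1 / β) = Θ := by
  subst ha hG hσ hJ hΘ
  exact generalized_one_gaussian_weighted_identity_general (zero_lt_one.trans hα) hα.ne' hβ hG'
    hσ_int (integral_mul_abs_rpow_mul_oneGaussian_nonneg (zero_lt_one.trans hα) hφ_nonneg)
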